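/- Let W ⊆ ℂ^m × ℂ^n be open, let ρ : W → ℝ be a smooth function whose complex Hessian (in all m+n complex variables) is positive semidefinite at every point of W, set X := {(t,z) ∈ W : ρ(t,z) < 0}, and assume X is bounded with its closure contained in W. Let φ : W → ℝ be smooth. For t ∈ ℂ^m write X_t := {z ∈ ℂ^n : (t,z) ∈ X}, and let K_t denote the diagonal Bergman kernel of H²(X_t, φ(t,·)) (with respect to Lebesgue measure on X_t). Then for every fixed z ∈ ℂ^n, the function t ↦ K_t(z) is upper semicontinuous on the open set {t ∈ ℂ^m : z ∈ X_t}. -/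

import Mathlib

open MeasureTheory Set
open scoped ENNReal ComplexOrder

noncomputable section

/-- The squared weighted `L²` norm `∫_Ω ‖f‖² e^{−φ} dμ`. -/
def bergNormSq {n : ℕ} (Ω : Set (Fin n → ℂ)) (φ : (Fin n → ℂ) → ℝ)
    (μ : Measure (Fin n → ℂ)) (f : (Fin n → ℂ) → ℂ) : ℝ≥0∞ :=
  ∫⁻ z in Ω, ENNReal.ofReal (‖f z‖ ^ 2 * Real.exp (-(φ z))) ∂μ

/-- The diagonal Bergman kernel of the weighted Bergman space `H²(Ω,μ,φ)`. -/
def bergKernel {n : ℕ} (Ω : Set (Fin n → ℂ)) (φ : (Fin n → ℂ) → ℝ)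
    (μ : Measure (Fin n → ℂ)) (z : Fin n → ℂ) : ℝ≥0∞ :=
  ⨆ (f : (Fin n → ℂ) → ℂ) (_ : DifferentiableOn ℂ f Ω)
    (_ : bergNormSq Ω φ μ f ≠ 0) (_ : bergNormSq Ω φ μ f ≠ ⊤),
    ENNReal.ofReal (‖f z‖ ^ 2) / bergNormSq Ω φ μ f

/-- Extended logarithm `ℝ≥0∞ → EReal`, with `elog 0 = ⊥`. -/
def elog (x : ℝ≥0∞) : EReal :=
  if x = 0 then ⊥ else if x = ⊤ then ⊤ else ((Real.log x.toReal : ℝ) : EReal)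

/-- Directional Wirtinger derivative `∂_v f` at `x`. -/
def wder {E : Type*} [NormedAddCommGroup E] [NormedSpace ℂ E]
    (f : E → ℂ) (v x : E) : ℂ :=
  (1 / 2 : ℂ) * (fderiv ℝ f x v - Complex.I * fderiv ℝ f x (Complex.I • v))

/-- Directional conjugate Wirtinger derivative `∂̄_v f` at `x`. -/
def wderBar {E : Type*} [NormedAddCommGroup E] [NormedSpace ℂ E]
    (f : E → ℂ) (v x : E) : ℂ :=
  (1 / 2 : ℂ) * (fderiv ℝ f x v + Complex.I * fderiv ℝ f x (Complex.I • v))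

/-- The complex Hessian (Levi form) of `u` is positive semidefinite on `W`. -/
def LeviPSD {E : Type*} [NormedAddCommGroup E] [NormedSpace ℂ E]
    (W : Set E) (u : E → ℝ) : Prop :=
  ∀ x ∈ W, ∀ v : E, 0 ≤ (wder (fun y => wderBar (fun q => (u q : ℂ)) v y) v x).re

/-- Pseudoconvexity of an open set via a smooth psh exhaustion function. -/
def Pseudoconvex {n : ℕ} (Ω : Set (Fin n → ℂ)) : Prop :=
  IsOpen Ω ∧ ∃ u : (Fin n → ℂ) → ℝ, ContDiffOn ℝ (⊤ : ℕ∞) u Ω ∧ LeviPSD Ω u ∧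
    ∀ c : ℝ, IsCompact {z ∈ Ω | u z ≤ c}

/-- Plurisubharmonicity (with values in `EReal`): upper semicontinuity plus the
sub-mean-value inequality on complex lines, expressed via continuous majorants. -/
def PshOn {E : Type*} [NormedAddCommGroup E] [NormedSpace ℂ E]
    (D : Set E) (u : E → EReal) : Prop :=
  UpperSemicontinuousOn u D ∧
  ∀ a ∈ D, ∀ w : E, ∀ r : ℝ, 0 < r →
    (∀ τ : ℂ, ‖τ‖ ≤ r → a + τ • w ∈ D) →
    ∀ g : ℝ → ℝ, Continuous g →
      (∀ θ : ℝ, u (a + (((r : ℂ) * Complex.exp (θ * Complex.I)) • w)) ≤ ((g θ : ℝ) : EReal)) →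
      u a ≤ (((1 / (2 * Real.pi)) * ∫ θ in (0:ℝ)..(2 * Real.pi), g θ : ℝ) : EReal)

/-- The twisted curvature positivity condition `Ξ_{δ,η}(e^{−φ}) ≥ 0` on `U × Ω`. -/
def XiNonneg {m n : ℕ} (U : Set (Fin m → ℂ)) (Ω : Set (Fin n → ℂ))
    (φ : (Fin m → ℂ) × (Fin n → ℂ) → ℝ) (η : (Fin n → ℂ) → ℝ) (δ : ℝ) : Prop :=
  ∀ p ∈ U ×ˢ Ω, ∀ vt : Fin m → ℂ, ∀ vz : Fin n → ℂ,
    0 ≤ (wder (fun y => wderBar (fun q => (φ q : ℂ))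
            ((vt, 0) : (Fin m → ℂ) × (Fin n → ℂ)) y) ((vt, 0)) p
      + wder (fun y => wderBar (fun q => (φ q : ℂ))
            (((0 : Fin m → ℂ), vz)) y) ((vt, 0)) p
      + wder (fun y => wderBar (fun q => (φ q : ℂ))
            ((vt, 0)) y) (((0 : Fin m → ℂ), vz)) p
      + ((δ / (1 + δ) : ℝ) : ℂ) *
        (wder (fun y => wderBar (fun q => (φ q : ℂ))
            (((0 : Fin m → ℂ), vz)) y) (((0 : Fin m → ℂ), vz)) p
          + 2 * wder (fun y => wderBar (fun w => (η w : ℂ)) vz y) vz p.2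
          - ((1 + δ : ℝ) : ℂ) * (Complex.normSq (wder (fun w => (η w : ℂ)) vz p.2) : ℂ))).re

/-!
Suppose that upper semicontinuity at `t₀` fails. Then there are `c > K_{t₀}(z)`, parameters
`t_k → t₀` and holomorphic functions `F_k` of norm at most one on the fibers over `t_k` with
`|F_k(z)|² ≥ c`. Every compact subset of the fiber over `t₀` lies in the nearby fibers, where the
weights are uniformly bounded above, so the mean value inequality bounds the `F_k` locally
uniformly and Montel's theorem yields a subsequence converging on the fiber over `t₀`. By Fatou's
lemma the limit has norm at most one, while `|f(z)|² ≥ c`: this contradicts `c > K_{t₀}(z)`.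
-/

section
open Filter Metric Topology

/-! ### Limits of holomorphic functions and Montel's theorem -/

theorem mapsTo_closedBall_of_norm_le {α G : Type*} [SeminormedAddCommGroup G] {f : α → G}
    {s : Set α} {w : α} {C : ℝ} (hC : ∀ y ∈ s, ‖f y‖ ≤ C) (hw : w ∈ s) :
    MapsTo f s (closedBall (f w) (2 * C)) := fun y hy => by
  rw [mem_closedBall, dist_eq_norm]
  linarith [norm_sub_le (f y) (f w), hC y hy, hC w hw]

theorem exists_strictMono_tendstoLocallyUniformly {α β : Type*} [TopologicalSpace α]
    [LocallyCompactSpace α] [SigmaCompactSpace α] [UniformSpace β]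
    [(uniformity β).IsCountablyGenerated] {l : Filter ℕ} [l.NeBot] {F : ℕ → α → β} {f : α → β}
    (hl : l ≤ atTop) (hf : TendstoLocallyUniformly F f l) :
    ∃ σ : ℕ → ℕ, StrictMono σ ∧ TendstoLocallyUniformly (fun k => F (σ k)) f atTop := by
  let K := CompactExhaustion.choice α
  obtain ⟨V, hV⟩ := (uniformity β).exists_antitone_basis
  obtain ⟨σ, hσ, hσV⟩ := extraction_forall_of_frequently
    (P := fun n k => ∀ x ∈ K n, (f x, F k x) ∈ V n) fun n =>
      (tendstoLocallyUniformly_iff_forall_isCompact.1 hf _ (K.isCompact n) _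
        (hV.mem n)).frequently.filter_mono hl
  refine ⟨σ, hσ, fun u hu x => ?_⟩
  obtain ⟨m, hm⟩ := K.exists_mem_nhds x
  obtain ⟨N, hN⟩ := hV.mem_iff.1 hu
  refine ⟨K m, hm, ?_⟩
  filter_upwards [eventually_ge_atTop m, eventually_ge_atTop N] with k hkm hkN y hy
  exact hN (hV.antitone hkN (hσV k y (K.subset hkm hy)))

theorem exists_strictMono_tendstoLocallyUniformlyOn {α β : Type*} [TopologicalSpace α]
    [LocallyCompactSpace α] [SecondCountableTopology α] [UniformSpace β]
    [(uniformity β).IsCountablyGenerated] {l : Filter ℕ} [l.NeBot] {F : ℕ → α → β} {f : α → β}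
    {s : Set α} (hs : IsLocallyClosed s) (hl : l ≤ atTop)
    (hf : TendstoLocallyUniformlyOn F f l s) :
    ∃ σ : ℕ → ℕ, StrictMono σ ∧ TendstoLocallyUniformlyOn (fun k => F (σ k)) f atTop s := by
  have := hs.locallyCompactSpace
  simp_rw [tendstoLocallyUniformlyOn_iff_tendstoLocallyUniformly_comp_coe] at hf ⊢
  exact exists_strictMono_tendstoLocallyUniformly hl hf

section Holomorphic
variable {E G : Type*} [NormedAddCommGroup E] [NormedSpace ℂ E] [NormedAddCommGroup G]
  [NormedSpace ℂ G]

theorem norm_sub_le_of_differentiableOn_ball {f : E → G} {w y : E} {R C : ℝ}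
    (hf : DifferentiableOn ℂ f (ball w R)) (hC : ∀ y ∈ ball w R, ‖f y‖ ≤ C)
    (hy : y ∈ ball w R) : ‖f y - f w‖ ≤ 2 * C / R * ‖y - w‖ := by
  have hw : w ∈ ball w R := mem_ball_self (pos_of_mem_ball hy)
  simpa only [dist_eq_norm] using
    Complex.dist_le_div_mul_dist_of_mapsTo_ball hf (mapsTo_closedBall_of_norm_le hC hw) hy

theorem norm_fderiv_le_of_differentiableOn_ball {f : E → G} {w : E} {R C : ℝ} (hR : 0 < R)
    (hf : DifferentiableOn ℂ f (ball w R)) (hC : ∀ y ∈ ball w R, ‖f y‖ ≤ C) :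
    ‖fderiv ℂ f w‖ ≤ 2 * C / R :=
  Complex.norm_fderiv_le_div_of_mapsTo_ball hf
    (mapsTo_closedBall_of_norm_le hC (mem_ball_self hR)) hR

theorem uniformCauchySeqOn_fderiv {ι : Type*} {l : Filter ι} {F : ι → E → G} {w : E} {r R : ℝ}
    (hrR : r < R) (hF : ∀ᶠ i in l, DifferentiableOn ℂ (F i) (ball w R))
    (hcauchy : UniformCauchySeqOn F l (ball w R)) :
    UniformCauchySeqOn (fun i => fderiv ℂ (F i)) l (ball w r) := by
  have hδ : 0 < R - r := sub_pos.2 hrR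
  intro u hu
  obtain ⟨ε, hε, hεu⟩ := mem_uniformity_dist.1 hu
  filter_upwards [hcauchy _ (dist_mem_uniformity (show 0 < ε * (R - r) / 4 by positivity)),
    hF.prod_mk hF] with ⟨i, j⟩ hij ⟨hi, hj⟩ y hy
  have hsub : ball y (R - r) ⊆ ball w R := ball_subset_ball' (by linarith [mem_ball.1 hy])
  have hyR : ball w R ∈ 𝓝 y := isOpen_ball.mem_nhds (hsub (mem_ball_self hδ))
  have hclose : ∀ x ∈ ball y (R - r), ‖(F i - F j) x‖ ≤ ε * (R - r) / 4 := fun x hx => by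
    rw [Pi.sub_apply, ← dist_eq_norm]
    exact le_of_lt (hij x (hsub hx))
  apply hεu
  calc dist (fderiv ℂ (F i) y) (fderiv ℂ (F j) y)
      = ‖fderiv ℂ (F i - F j) y‖ := by
        rw [dist_eq_norm, fderiv_sub (hi.differentiableAt hyR) (hj.differentiableAt hyR)]
    _ ≤ 2 * (ε * (R - r) / 4) / (R - r) :=
        norm_fderiv_le_of_differentiableOn_ball hδ ((hi.sub hj).mono hsub) hclose
    _ = ε / 2 := by field
    _ < ε := half_lt_self hε

theorem differentiableAt_of_tendstoUniformlyOn_ball [CompleteSpace G] {ι : Type*} {l : Filter ι}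
    [l.NeBot] {F : ι → E → G} {f : E → G} {w : E} {R : ℝ} (hR : 0 < R)
    (hF : ∀ᶠ i in l, DifferentiableOn ℂ (F i) (ball w R))
    (hf : TendstoUniformlyOn F f l (ball w R)) : DifferentiableAt ℂ f w := by
  have hcauchy := uniformCauchySeqOn_fderiv (half_lt_self hR) hF hf.uniformCauchySeqOn
  choose! f' hf' using fun y (hy : y ∈ ball w (R / 2)) =>
    cauchy_map_iff_exists_tendsto.1 (hcauchy.cauchy_map hy)
  have hlim : TendstoUniformlyOn (fun i => fderiv ℂ (F i)) f' l (ball w (R / 2)) :=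
    hcauchy.tendstoUniformlyOn_of_tendsto hf'
  have hnhds : 𝓝 w ≤ 𝓟 (ball w (R / 2)) := le_principal_iff.2 (ball_mem_nhds w (half_pos hR))
  refine (hasFDerivAt_of_tendstoUniformlyOnFilter (f := F)
    (hlim.tendstoUniformlyOnFilter.mono_right hnhds) ?_ ?_).differentiableAt
  · filter_upwards [hF.prod_mk (ball_mem_nhds w hR)] with ⟨i, y⟩ ⟨hi, hy⟩
    exact (hi.differentiableAt (isOpen_ball.mem_nhds hy)).hasFDerivAt
  · filter_upwards [ball_mem_nhds w hR] with y hy using hf.tendsto_at hy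

theorem differentiableOn_of_tendstoLocallyUniformlyOn [ProperSpace E] [CompleteSpace G]
    {ι : Type*} {l : Filter ι} [l.NeBot] {F : ι → E → G} {f : E → G} {Ω : Set E} (hΩ : IsOpen Ω)
    (hF : ∀ w ∈ Ω, ∃ R > 0, ∀ᶠ i in l, DifferentiableOn ℂ (F i) (ball w R))
    (hf : TendstoLocallyUniformlyOn F f l Ω) : DifferentiableOn ℂ f Ω := fun w hw => by
  obtain ⟨R, hR, hFR⟩ := hF w hw
  obtain ⟨r, hr, hrΩ⟩ := nhds_basis_closedBall.mem_iff.1 (hΩ.mem_nhds hw)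
  have hunif : TendstoUniformlyOn F f l (closedBall w r) :=
    (tendstoLocallyUniformlyOn_iff_forall_isCompact hΩ).1 hf _ hrΩ (isCompact_closedBall w r)
  refine (differentiableAt_of_tendstoUniformlyOn_ball (lt_min hR hr) (hFR.mono fun i hi => ?_)
    (hunif.mono ?_)).differentiableWithinAt
  · exact hi.mono (ball_subset_ball (min_le_left R r))
  · exact (ball_subset_ball (min_le_right R r)).trans ball_subset_closedBall

-- Along an ultrafilter, pointwise limits exist for free; equicontinuity makes them locally uniform.
theorem exists_tendstoLocallyUniformlyOn_ultrafilter [ProperSpace G] {ι : Type*}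
    {U : Ultrafilter ι} {F : ι → E → G} {Ω : Set E}
    (hF : ∀ w ∈ Ω, ∃ R > 0, ∃ C : ℝ, ∀ᶠ i in U,
      DifferentiableOn ℂ (F i) (ball w R) ∧ ∀ y ∈ ball w R, ‖F i y‖ ≤ C) :
    ∃ f : E → G, TendstoLocallyUniformlyOn F f U Ω := by
  have hpt : ∀ w ∈ Ω, ∃ a, Tendsto (fun i => F i w) U (𝓝 a) := fun w hw => by
    obtain ⟨R, hR, C, hRC⟩ := hF w hw
    have hmem : (U.map (fun i => F i w) : Filter G) ≤ 𝓟 (closedBall 0 C) :=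
      tendsto_principal.2 <| hRC.mono fun i hi =>
        mem_closedBall_zero_iff.2 (hi.2 w (mem_ball_self hR))
    obtain ⟨a, -, ha⟩ := (isCompact_closedBall (0 : G) C).ultrafilter_le_nhds _ hmem
    exact ⟨a, ha⟩
  choose! f hf using hpt
  refine ⟨f, tendstoLocallyUniformlyOn_iff.2 fun ε hε w hw => ?_⟩
  obtain ⟨R, hR, C, hRC⟩ := hF w hw
  have hnear : ∀ᶠ y in 𝓝 w, y ∈ ball w R ∧ 2 * C / R * ‖y - w‖ < ε / 3 :=
    (eventually_mem_set.2 (ball_mem_nhds w hR)).and <|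
      (show Continuous fun y => 2 * C / R * ‖y - w‖ by fun_prop).continuousAt.eventually_lt_const
        (by simpa using hε)
  have hequi : ∀ᶠ i in U, ∀ y, y ∈ ball w R ∧ 2 * C / R * ‖y - w‖ < ε / 3 →
      dist (F i y) (F i w) ≤ ε / 3 := hRC.mono fun i hi y hy => by
    rw [dist_eq_norm]
    exact (norm_sub_le_of_differentiableOn_ball hi.1 hi.2 hy.1).trans hy.2.le
  refine ⟨_, inter_mem_nhdsWithin Ω hnear, ?_⟩
  filter_upwards [hequi, Metric.tendsto_nhds.1 (hf w hw) (ε / 3) (by positivity)]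
    with i hi hiw y ⟨hyΩ, hy⟩
  have hlim : dist (f y) (f w) ≤ ε / 3 :=
    le_of_tendsto ((hf y hyΩ).dist (hf w hw)) (hequi.mono fun j hj => hj y hy)
  linarith [hi y hy, dist_triangle4_right (f y) (F i y) (f w) (F i w), dist_comm (F i w) (f w)]

/-- **Montel's theorem**. -/
theorem exists_differentiableOn_tendstoLocallyUniformlyOn_subseq [ProperSpace E] [ProperSpace G]
    {F : ℕ → E → G} {Ω : Set E} (hΩ : IsOpen Ω)
    (hF : ∀ w ∈ Ω, ∃ R > 0, ∃ C : ℝ, ∀ᶠ k in atTop,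
      DifferentiableOn ℂ (F k) (ball w R) ∧ ∀ y ∈ ball w R, ‖F k y‖ ≤ C) :
    ∃ f : E → G, DifferentiableOn ℂ f Ω ∧
      ∃ σ : ℕ → ℕ, StrictMono σ ∧ TendstoLocallyUniformlyOn (fun k => F (σ k)) f atTop Ω := by
  have hU : (hyperfilter ℕ : Filter ℕ) ≤ atTop := Nat.hyperfilter_le_atTop
  have hFU : ∀ w ∈ Ω, ∃ R > 0, ∃ C : ℝ, ∀ᶠ k in (hyperfilter ℕ : Filter ℕ),
      DifferentiableOn ℂ (F k) (ball w R) ∧ ∀ y ∈ ball w R, ‖F k y‖ ≤ C := fun w hw =>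
    let ⟨R, hR, C, hC⟩ := hF w hw
    ⟨R, hR, C, hC.filter_mono hU⟩
  obtain ⟨f, hf⟩ := exists_tendstoLocallyUniformlyOn_ultrafilter hFU
  refine ⟨f, differentiableOn_of_tendstoLocallyUniformlyOn hΩ (fun w hw => ?_) hf,
    exists_strictMono_tendstoLocallyUniformlyOn hΩ.isLocallyClosed hU hf⟩
  obtain ⟨R, hR, C, hC⟩ := hFU w hw
  exact ⟨R, hR, hC.mono fun k hk => hk.1⟩

end Holomorphic

/-! ### The mean value inequality -/

theorem measurePreserving_smul_of_norm_eq_one {𝕜 E : Type*} [NormedDivisionRing 𝕜]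
    [NormedAddCommGroup E] [Module 𝕜 E] [NormSMulClass 𝕜 E] [ProperSpace E] [MeasurableSpace E]
    [BorelSpace E] (μ : Measure E) [μ.IsAddHaarMeasure] {c : 𝕜} (hc : ‖c‖ = 1) :
    MeasurePreserving (c • · : E → E) μ μ := by
  have hc₀ : c ≠ 0 := norm_ne_zero_iff.1 (by rw [hc]; exact one_ne_zero)
  have hcont : Continuous (c • · : E → E) := continuous_const_smul c
  have hHaar : (μ.map (c • ·)).IsAddHaarMeasure :=
    (DistribMulAction.toAddEquiv₀ E c hc₀).isAddHaarMeasure_map μ hcont (continuous_const_smul c⁻¹)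
  have hball : (c • · : E → E) ⁻¹' closedBall 0 1 = closedBall 0 1 := by
    ext x
    simp [norm_smul, hc]
  have hsmul := Measure.isAddLeftInvariant_eq_smul (μ.map (c • ·)) μ
  have hfactor : (μ.map (c • ·)).addHaarScalarFactor μ = 1 := by
    have hμ : μ (closedBall 0 1) =
        (μ.map (c • ·)).addHaarScalarFactor μ * μ (closedBall 0 1) := by
      conv_lhs => rw [← hball, ← Measure.map_apply hcont.measurable measurableSet_closedBall, hsmul]
      rfl
    have hpos : μ (closedBall 0 1) ≠ 0 := (measure_closedBall_pos μ 0 one_pos).ne'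
    have hfin : μ (closedBall 0 1) ≠ ∞ := (isCompact_closedBall 0 1).measure_ne_top
    exact_mod_cast (ENNReal.mul_eq_right hpos hfin).1 hμ.symm
  exact ⟨hcont.measurable, by rw [hsmul, hfactor, one_smul]⟩

section MeanValue
variable {E G : Type*} [NormedAddCommGroup E] [NormedSpace ℂ E] [NormedAddCommGroup G]

section Rotation
variable [ProperSpace E] [MeasurableSpace E] [BorelSpace E] (μ : Measure E) [μ.IsAddHaarMeasure]

theorem aemeasurable_enorm_comp_circleMap_smul {h : E → G} {w : E} {R : ℝ}
    (hh : ContinuousOn h (closedBall w R)) :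
    AEMeasurable (fun p : E × ℝ => ‖h (w + circleMap 0 1 p.2 • p.1)‖ₑ)
      ((μ.restrict (closedBall 0 R)).prod (volume.restrict (Ioc 0 (2 * Real.pi)))) := by
  have hcont : ContinuousOn (fun p : E × ℝ => h (w + circleMap 0 1 p.2 • p.1))
      (closedBall 0 R ×ˢ Ioc 0 (2 * Real.pi)) := by
    refine hh.comp (f := fun p : E × ℝ => w + circleMap 0 1 p.2 • p.1)
      (by have := continuous_circleMap 0 1; fun_prop) ?_
    rintro ⟨ζ, θ⟩ ⟨hζ, -⟩
    simpa [norm_smul] using hζ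
  rw [Measure.prod_restrict]
  exact hcont.enorm.aemeasurable (measurableSet_closedBall.prod measurableSet_Ioc)

theorem setLIntegral_enorm_add_smul_closedBall (h : E → G) (w : E) (R : ℝ) {c : ℂ}
    (hc : ‖c‖ = 1) :
    ∫⁻ ζ in closedBall 0 R, ‖h (w + c • ζ)‖ₑ ∂μ = ∫⁻ y in closedBall w R, ‖h y‖ₑ ∂μ := by
  have hc₀ : c ≠ 0 := norm_ne_zero_iff.1 (by rw [hc]; exact one_ne_zero)
  have hpres : MeasurePreserving (fun ζ : E => w + c • ζ) μ μ :=
    (measurePreserving_add_left μ w).comp (measurePreserving_smul_of_norm_eq_one μ hc)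
  have hemb : MeasurableEmbedding (fun ζ : E => w + c • ζ) :=
    ((Homeomorph.smulOfNeZero c hc₀).trans (Homeomorph.addLeft w)).measurableEmbedding
  rw [← hpres.setLIntegral_comp_preimage_emb hemb (fun y => ‖h y‖ₑ)]
  congr 2
  ext ζ
  simp [norm_smul, hc]

end Rotation

variable [NormedSpace ℂ G] [CompleteSpace G]

theorem two_pi_mul_enorm_le_lintegral_circleMap {h : E → G} {w ζ : E} {R : ℝ}
    (hd : DifferentiableOn ℂ h (closedBall w R)) (hζ : ζ ∈ closedBall 0 R) :
    ENNReal.ofReal (2 * Real.pi) * ‖h w‖ₑ ≤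
      ∫⁻ θ in Ioc 0 (2 * Real.pi), ‖h (w + circleMap 0 1 θ • ζ)‖ₑ := by
  have hline : DifferentiableOn ℂ (fun s : ℂ => h (w + s • ζ)) (closedBall 0 |1|) := by
    refine hd.comp (f := fun s : ℂ => w + s • ζ) (by fun_prop) fun s hs => ?_
    simp only [abs_one, mem_closedBall, dist_zero_right, dist_self_add_left, norm_smul] at *
    nlinarith [norm_nonneg ζ, norm_nonneg s]
  have hpi : 0 < 2 * Real.pi := Real.two_pi_pos
  have hmean : ∫ θ in Ioc 0 (2 * Real.pi), h (w + circleMap 0 1 θ • ζ) =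
      (2 * Real.pi) • h w := by
    have hcircle := (hline.diffContOnCl_ball subset_rfl).circleAverage
    rwa [Real.circleAverage_def, inv_smul_eq_iff₀ hpi.ne',
      intervalIntegral.integral_of_le hpi.le, zero_smul, add_zero] at hcircle
  calc ENNReal.ofReal (2 * Real.pi) * ‖h w‖ₑ
      = ‖∫ θ in Ioc 0 (2 * Real.pi), h (w + circleMap 0 1 θ • ζ)‖ₑ := by
        rw [hmean, enorm_smul, Real.enorm_of_nonneg hpi.le]
    _ ≤ ∫⁻ θ in Ioc 0 (2 * Real.pi), ‖h (w + circleMap 0 1 θ • ζ)‖ₑ :=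
        enorm_integral_le_lintegral_enorm _

theorem enorm_mul_measure_closedBall_le_setLIntegral [ProperSpace E] [MeasurableSpace E]
    [BorelSpace E] (μ : Measure E) [μ.IsAddHaarMeasure] {h : E → G} {w : E} {R : ℝ}
    (hd : DifferentiableOn ℂ h (closedBall w R)) :
    ‖h w‖ₑ * μ (closedBall 0 R) ≤ ∫⁻ y in closedBall w R, ‖h y‖ₑ ∂μ := by
  have hpi : ENNReal.ofReal (2 * Real.pi) ≠ 0 := by simpa using Real.pi_pos
  refine (ENNReal.mul_le_mul_iff_right hpi ENNReal.ofReal_ne_top).1 ?_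
  calc ENNReal.ofReal (2 * Real.pi) * (‖h w‖ₑ * μ (closedBall 0 R))
      = ∫⁻ _ in closedBall 0 R, ENNReal.ofReal (2 * Real.pi) * ‖h w‖ₑ ∂μ := by
        rw [setLIntegral_const, mul_assoc]
    _ ≤ ∫⁻ ζ in closedBall 0 R,
          (∫⁻ θ in Ioc 0 (2 * Real.pi), ‖h (w + circleMap 0 1 θ • ζ)‖ₑ) ∂μ :=
        setLIntegral_mono' measurableSet_closedBall fun ζ hζ =>
          two_pi_mul_enorm_le_lintegral_circleMap hd hζ
    _ = ∫⁻ _ in Ioc 0 (2 * Real.pi), ∫⁻ y in closedBall w R, ‖h y‖ₑ ∂μ := by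
        rw [lintegral_lintegral_swap (aemeasurable_enorm_comp_circleMap_smul μ hd.continuousOn)]
        exact lintegral_congr fun θ =>
          setLIntegral_enorm_add_smul_closedBall μ h w R (by simp)
    _ = ENNReal.ofReal (2 * Real.pi) * ∫⁻ y in closedBall w R, ‖h y‖ₑ ∂μ := by
        rw [setLIntegral_const, Real.volume_Ioc, sub_zero, mul_comm]

end MeanValue

/-! ### Semicontinuity and Fatou's lemma -/

theorem setLIntegral_le_liminf_setLIntegral {ι α : Type*} [MeasurableSpace α] {μ : Measure α}
    {l : Filter ι} [l.IsCountablyGenerated] {s : Set α} {S : ι → Set α} {g : α → ℝ≥0∞}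
    {G : ι → α → ℝ≥0∞} (hs : MeasurableSet s) (hS : ∀ i, MeasurableSet (S i))
    (hG : ∀ i, AEMeasurable (G i) (μ.restrict (S i))) (hsS : ∀ x ∈ s, ∀ᶠ i in l, x ∈ S i)
    (hg : ∀ x ∈ s, g x ≤ liminf (fun i => G i x) l) :
    ∫⁻ x in s, g x ∂μ ≤ liminf (fun i => ∫⁻ x in S i, G i x ∂μ) l := by
  simp_rw [← lintegral_indicator hs, ← lintegral_indicator (hS _)]
  refine (lintegral_mono fun x => ?_).trans
    (lintegral_liminf_le' fun i => (aemeasurable_indicator_iff (hS i)).2 (hG i))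
  by_cases hx : x ∈ s
  · rw [indicator_of_mem hx]
    refine (hg x hx).trans_eq (liminf_congr ?_)
    filter_upwards [hsS x hx] with i hi
    rw [indicator_of_mem hi]
  · rw [indicator_of_notMem hx]
    exact zero_le

theorem aemeasurable_restrict_of_lowerSemicontinuousOn {α β : Type*} [TopologicalSpace α]
    [MeasurableSpace α] [OpensMeasurableSpace α] [TopologicalSpace β] [MeasurableSpace β]
    [BorelSpace β] [LinearOrder β] [OrderTopology β] [SecondCountableTopology β] {μ : Measure α}
    {s : Set α} {g : α → β} (hs : MeasurableSet s) (hg : LowerSemicontinuousOn g s) :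
    AEMeasurable g (μ.restrict s) :=
  aemeasurable_restrict_of_measurable_subtype hs
    (lowerSemicontinuous_restrict_iff.2 hg).measurable

section Semicontinuity
variable {α : Type*} [TopologicalSpace α] {s : Set α} {x : α}

theorem le_liminf_of_lowerSemicontinuousOn {ι γ : Type*} [CompleteLinearOrder γ]
    {l : Filter ι} {g : α → γ} {u : ι → α} (hg : LowerSemicontinuousOn g s)
    (hs : IsOpen s) (hx : x ∈ s) (hu : Tendsto u l (𝓝 x)) :
    g x ≤ liminf (fun i => g (u i)) l :=
  (hg.le_liminf x hx).trans (liminf_le_liminf_of_le (hs.nhdsWithin_eq hx ▸ hu))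

theorem lowerSemicontinuousOn_ofReal_exp_neg {φ : α → ℝ} (hφ : UpperSemicontinuousOn φ s) :
    LowerSemicontinuousOn (fun x => ENNReal.ofReal (Real.exp (-φ x))) s :=
  Continuous.comp_upperSemicontinuousOn_antitone (g := fun x => ENNReal.ofReal (Real.exp (-x)))
    (ENNReal.continuous_ofReal.comp (by fun_prop)) hφ fun _ _ hxy =>
      ENNReal.ofReal_le_ofReal (Real.exp_le_exp.2 (neg_le_neg hxy))

theorem eventually_mem_and_lt_of_upperSemicontinuousOn {β : Type*} [Preorder β] {φ : α → β}
    {M : β} (hφ : UpperSemicontinuousOn φ s) (hs : IsOpen s) (hx : x ∈ s) (hM : φ x < M) :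
    ∀ᶠ y in 𝓝 x, y ∈ s ∧ φ y < M :=
  (hs.eventually_mem hx).and (hs.nhdsWithin_eq hx ▸ hφ x hx M hM)

end Semicontinuity

theorem exists_closedBall_eventually_forall_mem_and_le {T α : Type*} [TopologicalSpace T]
    [PseudoMetricSpace α] {X : Set (T × α)} {φ : T × α → ℝ} {t₀ : T} {x : α} (hX : IsOpen X)
    (hφ : UpperSemicontinuousOn φ X) (hx : (t₀, x) ∈ X) :
    ∃ R > 0, ∃ M, ∀ᶠ t in 𝓝 t₀, ∀ y ∈ closedBall x R, (t, y) ∈ X ∧ φ (t, y) ≤ M := by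
  obtain ⟨u, hu, v, hv, huv⟩ := mem_nhds_prod_iff.1
    (eventually_mem_and_lt_of_upperSemicontinuousOn hφ hX hx (lt_add_one (φ (t₀, x))))
  obtain ⟨R, hR, hRv⟩ := nhds_basis_closedBall.mem_iff.1 hv
  refine ⟨R, hR, φ (t₀, x) + 1, ?_⟩
  filter_upwards [hu] with t ht y hy
  exact (huv (mk_mem_prod ht (hRv hy))).imp_right le_of_lt

/-! ### The Bergman kernel of a fixed domain -/

section Bergman
variable {n : ℕ} {Ω : Set (Fin n → ℂ)} {φ : (Fin n → ℂ) → ℝ} {μ : Measure (Fin n → ℂ)}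
  {f : (Fin n → ℂ) → ℂ} {z : Fin n → ℂ}

theorem bergNormSq_eq_lintegral_enorm :
    bergNormSq Ω φ μ f = ∫⁻ z in Ω, ‖f z‖ₑ ^ 2 * ENNReal.ofReal (Real.exp (-φ z)) ∂μ := by
  simp only [bergNormSq, ENNReal.ofReal_mul (sq_nonneg _), ENNReal.ofReal_pow (norm_nonneg _),
    ofReal_norm]

theorem bergNormSq_const_mul (c : ℂ) :
    bergNormSq Ω φ μ (fun w => c * f w) = ‖c‖ₑ ^ 2 * bergNormSq Ω φ μ f := by
  simp only [bergNormSq_eq_lintegral_enorm, enorm_mul, mul_pow, mul_assoc]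
  exact lintegral_const_mul' _ _ (by simp)

theorem exists_bergNormSq_le_one_of_lt_bergKernel {c : ℝ≥0∞} (hc : c < bergKernel Ω φ μ z) :
    ∃ f, DifferentiableOn ℂ f Ω ∧ bergNormSq Ω φ μ f ≤ 1 ∧ c ≤ ‖f z‖ₑ ^ 2 := by
  simp only [bergKernel, lt_iSup_iff] at hc
  obtain ⟨f, hf, h₀, htop, hcf⟩ := hc
  rw [ENNReal.ofReal_pow (norm_nonneg _), ofReal_norm] at hcf
  set N := bergNormSq Ω φ μ f
  have hN : 0 < N.toReal := ENNReal.toReal_pos h₀ htop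
  obtain ⟨a, ha⟩ : ∃ a : ℂ, ‖a‖ₑ ^ 2 = N⁻¹ := by
    refine ⟨((√N.toReal)⁻¹ : ℝ), ?_⟩
    rw [← ofReal_norm, Complex.norm_real, Real.norm_of_nonneg (by positivity),
      ← ENNReal.ofReal_pow (by positivity), inv_pow, Real.sq_sqrt hN.le,
      ENNReal.ofReal_inv_of_pos hN, ENNReal.ofReal_toReal htop]
  refine ⟨fun w => a * f w, hf.const_mul a, ?_, ?_⟩
  · rw [bergNormSq_const_mul, ha, ENNReal.inv_mul_cancel h₀ htop]
  · rw [enorm_mul, mul_pow, ha, mul_comm, ← div_eq_mul_inv]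
    exact hcf.le

variable [μ.IsAddHaarMeasure]

theorem enorm_sq_mul_measure_closedBall_le_bergNormSq {R M : ℝ} (hΩ : closedBall z R ⊆ Ω)
    (hφ : ∀ y ∈ closedBall z R, φ y ≤ M) (hf : DifferentiableOn ℂ f Ω) :
    ‖f z‖ₑ ^ 2 * μ (closedBall 0 R) ≤ ENNReal.ofReal (Real.exp M) * bergNormSq Ω φ μ f := by
  have hexp : ∀ y ∈ closedBall z R,
      1 ≤ ENNReal.ofReal (Real.exp M) * ENNReal.ofReal (Real.exp (-φ y)) := fun y hy => by
    rw [← ENNReal.ofReal_mul (Real.exp_nonneg M), ← Real.exp_add, ENNReal.one_le_ofReal]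
    exact Real.one_le_exp (by linarith [hφ y hy])
  calc ‖f z‖ₑ ^ 2 * μ (closedBall 0 R)
      = ‖f z ^ 2‖ₑ * μ (closedBall 0 R) := by rw [enorm_pow]
    _ ≤ ∫⁻ y in closedBall z R, ‖f y ^ 2‖ₑ ∂μ :=
        enorm_mul_measure_closedBall_le_setLIntegral μ (h := fun y => f y ^ 2)
          ((hf.mono hΩ).pow 2)
    _ ≤ ∫⁻ y in closedBall z R, ENNReal.ofReal (Real.exp M) *
          (‖f y‖ₑ ^ 2 * ENNReal.ofReal (Real.exp (-φ y))) ∂μ :=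
        setLIntegral_mono' measurableSet_closedBall fun y hy => by
          rw [enorm_pow, mul_left_comm]
          exact le_mul_of_one_le_right' (hexp y hy)
    _ ≤ ∫⁻ y in Ω, ENNReal.ofReal (Real.exp M) *
          (‖f y‖ₑ ^ 2 * ENNReal.ofReal (Real.exp (-φ y))) ∂μ := lintegral_mono_set hΩ
    _ = ENNReal.ofReal (Real.exp M) * bergNormSq Ω φ μ f := by
        rw [lintegral_const_mul' _ _ ENNReal.ofReal_ne_top, bergNormSq_eq_lintegral_enorm]

theorem eq_zero_of_bergNormSq_eq_zero (hΩ : IsOpen Ω) (hφ : UpperSemicontinuousOn φ Ω)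
    (hz : z ∈ Ω) (hf : DifferentiableOn ℂ f Ω) (h₀ : bergNormSq Ω φ μ f = 0) : f z = 0 := by
  obtain ⟨R, hR, hball⟩ := nhds_basis_closedBall.eventually_iff.1
    (eventually_mem_and_lt_of_upperSemicontinuousOn hφ hΩ hz (lt_add_one (φ z)))
  have hzero := enorm_sq_mul_measure_closedBall_le_bergNormSq (μ := μ)
    (fun y hy => (hball hy).1) (fun y hy => (hball hy).2.le) hf
  rw [h₀, mul_zero, nonpos_iff_eq_zero, mul_eq_zero] at hzero
  simpa using hzero.resolve_right (measure_closedBall_pos μ 0 hR).ne'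

theorem enorm_sq_le_bergKernel_mul_bergNormSq (hΩ : IsOpen Ω) (hφ : UpperSemicontinuousOn φ Ω)
    (hz : z ∈ Ω) (hf : DifferentiableOn ℂ f Ω) (htop : bergNormSq Ω φ μ f ≠ ∞) :
    ‖f z‖ₑ ^ 2 ≤ bergKernel Ω φ μ z * bergNormSq Ω φ μ f := by
  by_cases h₀ : bergNormSq Ω φ μ f = 0
  · simp [eq_zero_of_bergNormSq_eq_zero hΩ hφ hz hf h₀]
  · rw [← ENNReal.div_le_iff h₀ htop, ← ofReal_norm, ← ENNReal.ofReal_pow (norm_nonneg _)]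
    exact le_iSup₂_of_le f hf (le_iSup₂_of_le h₀ htop le_rfl)

end Bergman

/-! ### Families of domains -/

section Family
variable {T : Type*} [TopologicalSpace T] {n : ℕ} {X : Set (T × (Fin n → ℂ))}
  {φ : T × (Fin n → ℂ) → ℝ} {t₀ : T}

theorem bergNormSq_le_liminf {μ : Measure (Fin n → ℂ)} {ι : Type*} {l : Filter ι} [l.NeBot]
    [l.IsCountablyGenerated] (hX : IsOpen X) (hφ : UpperSemicontinuousOn φ X) {t : ι → T}
    (ht : Tendsto t l (𝓝 t₀)) {F : ι → (Fin n → ℂ) → ℂ} {f : (Fin n → ℂ) → ℂ}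
    (hF : ∀ i, AEMeasurable (F i) (μ.restrict {w | (t i, w) ∈ X}))
    (hf : ∀ w, (t₀, w) ∈ X → Tendsto (fun i => F i w) l (𝓝 (f w))) :
    bergNormSq {w | (t₀, w) ∈ X} (fun w => φ (t₀, w)) μ f ≤
      liminf (fun i => bergNormSq {w | (t i, w) ∈ X} (fun w => φ (t i, w)) μ (F i)) l := by
  have hweight : LowerSemicontinuousOn (fun p => ENNReal.ofReal (Real.exp (-φ p))) X :=
    lowerSemicontinuousOn_ofReal_exp_neg hφ
  have hmeas (s : T) : MeasurableSet {w | (s, w) ∈ X} :=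
    (hX.preimage (Continuous.prodMk_right s)).measurableSet
  have hslice (w : Fin n → ℂ) : Tendsto (fun i => (t i, w)) l (𝓝 (t₀, w)) :=
    ht.prodMk_nhds tendsto_const_nhds
  simp only [bergNormSq_eq_lintegral_enorm]
  refine setLIntegral_le_liminf_setLIntegral (hmeas t₀) (fun i => hmeas (t i)) (fun i => ?_)
    (fun w hw => (hslice w).eventually_mem (hX.mem_nhds hw)) (fun w hw => ?_)
  · exact ((hF i).enorm.pow_const 2).mul <| aemeasurable_restrict_of_lowerSemicontinuousOn
      (hmeas (t i)) (hweight.comp (Continuous.prodMk_right (t i)).continuousOn fun w hw => hw)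
  · have hnorm : ‖f w‖ₑ ^ 2 ≤ liminf (fun i => ‖F i w‖ₑ ^ 2) l :=
      (ENNReal.Tendsto.pow (hf w hw).enorm).liminf_eq.ge
    have hlim := le_liminf_of_lowerSemicontinuousOn hweight hX hw (hslice w)
    exact (mul_le_mul' hnorm hlim).trans ENNReal.le_liminf_mul

theorem exists_ball_eventually_forall_bergNormSq_le_one_norm_le (μ : Measure (Fin n → ℂ))
    [μ.IsAddHaarMeasure] {z : Fin n → ℂ} (hX : IsOpen X) (hφ : UpperSemicontinuousOn φ X)
    (hz : (t₀, z) ∈ X) :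
    ∃ R > 0, ∃ C : ℝ, ∀ᶠ t in 𝓝 t₀, ball z R ⊆ {w | (t, w) ∈ X} ∧
      ∀ f, DifferentiableOn ℂ f {w | (t, w) ∈ X} →
        bergNormSq {w | (t, w) ∈ X} (fun w => φ (t, w)) μ f ≤ 1 → ∀ y ∈ ball z R, ‖f y‖ ≤ C := by
  obtain ⟨R, hR, M, hM⟩ := exists_closedBall_eventually_forall_mem_and_le hX hφ hz
  set B := μ (closedBall (0 : Fin n → ℂ) (R / 2))
  have hB₀ : B ≠ 0 := (measure_closedBall_pos μ 0 (half_pos hR)).ne'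
  have hBtop : B ≠ ∞ := (isCompact_closedBall _ _).measure_ne_top
  refine ⟨R / 2, half_pos hR, √(Real.exp M / B.toReal), ?_⟩
  filter_upwards [hM] with t ht
  refine ⟨fun y hy => (ht y (ball_subset_closedBall (ball_subset_ball (half_le_self hR.le) hy))).1,
    fun f hf hf₁ y hy => ?_⟩
  have hsub : closedBall y (R / 2) ⊆ closedBall z R :=
    closedBall_subset_closedBall' (by linarith [mem_ball.1 hy])
  have hbound : ‖f y‖ₑ ^ 2 * B ≤ ENNReal.ofReal (Real.exp M) :=
    (enorm_sq_mul_measure_closedBall_le_bergNormSq (fun x hx => (ht x (hsub hx)).1)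
      (fun x hx => (ht x (hsub hx)).2) hf).trans (mul_le_of_le_one_right' hf₁)
  have hreal : ‖f y‖ ^ 2 * B.toReal ≤ Real.exp M := by
    simpa [Real.exp_nonneg] using ENNReal.toReal_mono ENNReal.ofReal_ne_top hbound
  exact Real.le_sqrt_of_sq_le ((le_div_iff₀ (ENNReal.toReal_pos hB₀ hBtop)).2 hreal)

theorem exists_tendsto_subseq_of_bergNormSq_le_one {μ : Measure (Fin n → ℂ)}
    [μ.IsAddHaarMeasure] (hX : IsOpen X) (hφ : UpperSemicontinuousOn φ X) {t : ℕ → T}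
    (ht : Tendsto t atTop (𝓝 t₀)) {F : ℕ → (Fin n → ℂ) → ℂ}
    (hF : ∀ k, DifferentiableOn ℂ (F k) {w | (t k, w) ∈ X})
    (hF₁ : ∀ k, bergNormSq {w | (t k, w) ∈ X} (fun w => φ (t k, w)) μ (F k) ≤ 1) :
    ∃ f, DifferentiableOn ℂ f {w | (t₀, w) ∈ X} ∧
      bergNormSq {w | (t₀, w) ∈ X} (fun w => φ (t₀, w)) μ f ≤ 1 ∧
      ∃ σ : ℕ → ℕ, StrictMono σ ∧
        ∀ w, (t₀, w) ∈ X → Tendsto (fun k => F (σ k) w) atTop (𝓝 (f w)) := by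
  have hopen (s : T) : IsOpen {w | (s, w) ∈ X} := hX.preimage (Continuous.prodMk_right s)
  obtain ⟨f, hf, σ, hσ, hlim⟩ :=
    exists_differentiableOn_tendstoLocallyUniformlyOn_subseq (hopen t₀) fun w hw => by
      obtain ⟨R, hR, C, hC⟩ :=
        exists_ball_eventually_forall_bergNormSq_le_one_norm_le μ hX hφ hw
      exact ⟨R, hR, C, (ht.eventually hC).mono fun k hk =>
        ⟨(hF k).mono hk.1, hk.2 (F k) (hF k) (hF₁ k)⟩⟩
  have htendsto : ∀ w, (t₀, w) ∈ X → Tendsto (fun k => F (σ k) w) atTop (𝓝 (f w)) :=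
    fun w hw => hlim.tendsto_at hw
  have hfatou := bergNormSq_le_liminf (μ := μ) hX hφ (ht.comp hσ.tendsto_atTop)
    (fun k => (hF (σ k)).continuousOn.aemeasurable (hopen (t (σ k))).measurableSet) htendsto
  have hliminf := hfatou.trans <|
    liminf_le_of_frequently_le' (Frequently.of_forall fun k => hF₁ (σ k))
  exact ⟨f, hf, hliminf, σ, hσ, htendsto⟩

theorem bergKernel_upperSemicontinuous_general [FirstCountableTopology T]
    (μ : Measure (Fin n → ℂ)) [μ.IsAddHaarMeasure] (hX : IsOpen X)
    (hφ : UpperSemicontinuousOn φ X) (z : Fin n → ℂ) :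
    UpperSemicontinuousOn
      (fun t => bergKernel {w | (t, w) ∈ X} (fun w => φ (t, w)) μ z) {t | (t, z) ∈ X} := by
  intro t₀ ht₀ b hb
  by_contra hfreq
  obtain ⟨c, hc, hcb⟩ := exists_between hb
  obtain ⟨t, ht, hbt⟩ := exists_seq_forall_of_frequently (not_eventually.1 hfreq)
  choose F hF hF₁ hFz using fun k =>
    exists_bergNormSq_le_one_of_lt_bergKernel (hcb.trans_le (not_lt.1 (hbt k)))
  obtain ⟨f, hf, hf₁, σ, -, hlim⟩ :=
    exists_tendsto_subseq_of_bergNormSq_le_one hX hφ (ht.mono_right inf_le_left) hF hF₁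
  have hfz : c ≤ ‖f z‖ₑ ^ 2 :=
    ge_of_tendsto' (ENNReal.Tendsto.pow (hlim z ht₀).enorm) fun k => hFz (σ k)
  have hkernel : ‖f z‖ₑ ^ 2 ≤ bergKernel {w | (t₀, w) ∈ X} (fun w => φ (t₀, w)) μ z *
      bergNormSq {w | (t₀, w) ∈ X} (fun w => φ (t₀, w)) μ f :=
    enorm_sq_le_bergKernel_mul_bergNormSq (hX.preimage (Continuous.prodMk_right t₀))
      (hφ.comp (Continuous.prodMk_right t₀).continuousOn fun w hw => hw) ht₀ hf
      (hf₁.trans_lt ENNReal.one_lt_top).ne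
  exact hc.not_ge ((hfz.trans hkernel).trans (mul_le_of_le_one_right' hf₁))

end Family
end

/-- **Upper semicontinuity of the fiberwise Bergman kernel** for a bounded pseudoconvex
family `X = {ρ < 0}` cut out of an open set `W ⊆ ℂ^m × ℂ^n` by a smooth
plurisubharmonic function `ρ`. -/
theorem bergKernel_upperSemicontinuous {m n : ℕ}
    (W : Set ((Fin m → ℂ) × (Fin n → ℂ))) (hW : IsOpen W)
    (ρ : (Fin m → ℂ) × (Fin n → ℂ) → ℝ) (hρ : ContDiffOn ℝ (⊤ : ℕ∞) ρ W)
    (hρpsd : ∀ p ∈ W, ∀ v : (Fin m → ℂ) × (Fin n → ℂ),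
      0 ≤ (wder (fun y => wderBar (fun q => (ρ q : ℂ)) v y) v p).re)
    (X : Set ((Fin m → ℂ) × (Fin n → ℂ))) (hX : X = {p ∈ W | ρ p < 0})
    (hXb : Bornology.IsBounded X) (hXcl : closure X ⊆ W)
    (φ : (Fin m → ℂ) × (Fin n → ℂ) → ℝ) (hφ : ContDiffOn ℝ (⊤ : ℕ∞) φ W)
    (z : Fin n → ℂ) :
    UpperSemicontinuousOn
      (fun t => bergKernel {w : Fin n → ℂ | (t, w) ∈ X} (fun w => φ (t, w)) volume z)
      {t : Fin m → ℂ | (t, z) ∈ X} := by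
  have hXo : IsOpen X := hX ▸ hρ.continuousOn.isOpen_inter_preimage hW isOpen_Iio
  exact bergKernel_upperSemicontinuous_general volume hXo
    ((hφ.continuousOn.mono (subset_closure.trans hXcl)).upperSemicontinuousOn) z
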